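/- Let a, b, c ≥ 1 be integers and let γ > 0. Then there exist η > 0 and n₀ such that for all n ≥ n₀ the following holds: if H is a 3-uniform hypergraph on an n-element vertex set V with minimum vertex degree δ(H) ≥ (6 − 4√2 + γ)·C(n,2), then for every vertex v of H, the number of copies of K³_{a,b,c} containing v is at least η·n^{a+b+c−1}. -/

import Mathlib

/-!
Let `L` be the link graph of `v`. The main point is that `Ω(n³)` triples `(x, y, z)` have both `xyz`
and `vyz` in `H`; supersaturation then turns these triples into copies `(A, B, C)` of `K³_{a,b,c}`
in which `B × C` consists of pairs of `L`, and `v` can be exchanged with an element of `A`.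

If there were few such triples, then for all but `εn` vertices `x` almost no edge `xyz` contains a
pair of `L`. Among these vertices take `x` of largest degree `kn` in `L`, and let every vertex of
`H` have degree at least `d n² / 2`. The link of `x` is essentially disjoint from `L` and lives
outside the neighbourhood of `x` in `L`, so `d ≤ (1 - k)²` and, counting the pairs of `L` that meet
this neighbourhood, `2d ≤ (1 - k)² + 2k²`. Averaging the degrees in `L` gives `d ≤ k`. For
`d > 6 - 4√2` these three inequalities are incompatible.
-/

open Finset Filter
open scoped BigOperators

section Averages

variable {V : Type*} [Fintype V]

lemma dens_filter_lt_mul_le_expect (f : V → ℝ) (hf : ∀ x, 0 ≤ f x) (s : ℝ) :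
    (dens {x | s < f x} : ℝ) * s ≤ 𝔼 x, f x := by
  rw [nnratCast_dens, Fintype.expect_eq_sum_div_card, div_mul_eq_mul_div]
  gcongr
  calc (#{x | s < f x} : ℝ) * s = ∑ x with s < f x, s := by rw [sum_const, nsmul_eq_mul]
    _ ≤ ∑ x with s < f x, f x := sum_le_sum fun x hx ↦ (mem_filter.1 hx).2.le
    _ ≤ ∑ x, f x := sum_le_univ_sum_of_nonneg hf

lemma exists_le_and_dens_le_and_forall_notMem_le [Nonempty V] {f : V → ℝ} (hf : ∀ x, 0 ≤ f x)
    (g : V → ℝ) {ε : ℝ} (hε : 0 < ε) (hε1 : ε < 1) (hfε : 𝔼 x, f x ≤ ε ^ 2) :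
    ∃ x, ∃ B : Finset V, f x ≤ ε ∧ (B.dens : ℝ) ≤ ε ∧ ∀ y ∉ B, g y ≤ g x := by
  classical
  set B : Finset V := {x | ε < f x} with hB
  have hBε : (B.dens : ℝ) ≤ ε := by
    refine le_of_mul_le_mul_right ((dens_filter_lt_mul_le_expect f hf ε).trans ?_) hε
    rwa [← sq]
  have hBc : Bᶜ.Nonempty := by
    rw [nonempty_iff_ne_empty, Ne, compl_eq_empty_iff]
    intro hBuniv
    rw [hBuniv, dens_univ, NNRat.cast_one] at hBε
    exact hBε.not_gt hε1
  obtain ⟨x, hx, hmax⟩ := exists_max_image Bᶜ g hBc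
  exact ⟨x, B, by simpa [hB] using hx, hBε, fun y hy ↦ hmax y (mem_compl.2 hy)⟩

lemma expect_mul_le_expect_mul_add_dens {w g : V → ℝ} {M : ℝ} {B : Finset V} (hw0 : ∀ y, 0 ≤ w y)
    (hw1 : ∀ y, w y ≤ 1) (hg1 : ∀ y, g y ≤ 1) (hM : 0 ≤ M) (hgM : ∀ y ∉ B, g y ≤ M) :
    𝔼 y, w y * g y ≤ (𝔼 y, w y) * M + B.dens := by
  classical
  have hpoint (y : V) : w y * g y ≤ w y * M + if y ∈ B then 1 else 0 := by
    split_ifs with hy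
    · nlinarith [hw0 y, hw1 y, hg1 y, mul_nonneg (hw0 y) hM]
    · nlinarith [hw0 y, hgM y hy]
  calc 𝔼 y, w y * g y ≤ 𝔼 y, (w y * M + if y ∈ B then 1 else 0) :=
        expect_le_expect fun y _ ↦ hpoint y
    _ = (𝔼 y, w y) * M + B.dens := by
        rw [expect_add_distrib, ← expect_mul, Fintype.expect_eq_sum_div_card (fun y ↦ ite _ _ _),
          sum_boole, filter_mem_eq_inter, univ_inter, nnratCast_dens]

end Averages

section WeightedGraphs

variable {V : Type*}

/-- A graph on `V` with edge weights in `[0, 1]`; loops are allowed. -/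
structure IsWeightedGraph (l : V → V → ℝ) : Prop where
  symm : ∀ x y, l x y = l y x
  nonneg : ∀ x y, 0 ≤ l x y
  le_one : ∀ x y, l x y ≤ 1

/-- A 3-uniform hypergraph on `V` with edge weights in `[0, 1]`; triples with repeated entries may
have positive weight. -/
structure IsWeightedThreeGraph (t : V → V → V → ℝ) : Prop where
  swap_left : ∀ x y z, t x y z = t y x z
  swap_right : ∀ x y z, t x y z = t x z y
  nonneg : ∀ x y z, 0 ≤ t x y z
  le_one : ∀ x y z, t x y z ≤ 1

lemma IsWeightedThreeGraph.link {t : V → V → V → ℝ} (ht : IsWeightedThreeGraph t) (v : V) :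
    IsWeightedGraph (t v) :=
  ⟨ht.swap_right v, ht.nonneg v, ht.le_one v⟩

variable [Fintype V]

/-- The degree of `x` in the weighted graph `l`, as a proportion of the number of vertices. -/
noncomputable def degreeDensity (l : V → V → ℝ) (x : V) : ℝ := 𝔼 y, l x y

/-- The density of the edges `xyz` of `t` at `x`, each counted with the total `l`-weight of its
three pairs: it measures how far the link of `x` is from avoiding `l` and the `l`-neighbours of
`x`. -/
noncomputable def conflict (t : V → V → V → ℝ) (l : V → V → ℝ) (x : V) : ℝ :=
  𝔼 y, 𝔼 z, t x y z * (l y z + l x y + l x z)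

variable {t : V → V → V → ℝ} {l : V → V → ℝ}

namespace IsWeightedGraph

lemma degreeDensity_nonneg (hl : IsWeightedGraph l) (x : V) : 0 ≤ degreeDensity l x :=
  expect_nonneg fun y _ ↦ hl.nonneg x y

lemma degreeDensity_le_one (hl : IsWeightedGraph l) (x : V) : degreeDensity l x ≤ 1 :=
  expect_le ⟨x, mem_univ x⟩ fun y _ ↦ hl.le_one x y

end IsWeightedGraph

lemma conflict_nonneg (ht : IsWeightedThreeGraph t) (hl : IsWeightedGraph l) (x : V) :
    0 ≤ conflict t l x :=
  expect_nonneg fun y _ ↦ expect_nonneg fun z _ ↦ mul_nonneg (ht.nonneg x y z) <|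
    add_nonneg (add_nonneg (hl.nonneg y z) (hl.nonneg x y)) (hl.nonneg x z)

lemma expect_conflict (ht : IsWeightedThreeGraph t) (l : V → V → ℝ) :
    𝔼 x, conflict t l x = 3 * 𝔼 x, 𝔼 y, 𝔼 z, t x y z * l y z := by
  have hxz : 𝔼 x, 𝔼 y, 𝔼 z, t x y z * l x z = 𝔼 x, 𝔼 y, 𝔼 z, t x y z * l y z := by
    rw [expect_comm]
    simp_rw [ht.swap_left]
  have hxy : 𝔼 x, 𝔼 y, 𝔼 z, t x y z * l x y = 𝔼 x, 𝔼 y, 𝔼 z, t x y z * l x z :=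
    expect_congr rfl fun x _ ↦ by
      rw [expect_comm]
      simp_rw [ht.swap_right x]
  simp only [conflict, mul_add, expect_add_distrib]
  rw [hxy, hxz]
  ring

lemma expect_expect_one_sub_mul_one_sub (l : V → V → ℝ) (x : V) :
    𝔼 y, 𝔼 z, (1 - l x y) * (1 - l x z) = (1 - degreeDensity l x) ^ 2 := by
  have : Nonempty V := ⟨x⟩
  rw [← Fintype.expect_mul_expect, expect_sub_distrib, Fintype.expect_const, degreeDensity, sq]

lemma expect_link_le (ht : IsWeightedThreeGraph t) (hl : IsWeightedGraph l) (x : V) :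
    𝔼 y, 𝔼 z, t x y z ≤ conflict t l x + (1 - degreeDensity l x) ^ 2 := by
  have hpoint (y z : V) :
      t x y z ≤ t x y z * (l y z + l x y + l x z) + (1 - l x y) * (1 - l x z) := by
    nlinarith [mul_nonneg (ht.nonneg x y z) (hl.nonneg y z),
      mul_nonneg (ht.nonneg x y z) (mul_nonneg (hl.nonneg x y) (hl.nonneg x z)),
      mul_nonneg (sub_nonneg.2 (ht.le_one x y z))
        (mul_nonneg (sub_nonneg.2 (hl.le_one x y)) (sub_nonneg.2 (hl.le_one x z)))]
  calc 𝔼 y, 𝔼 z, t x y z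
      ≤ 𝔼 y, 𝔼 z, (t x y z * (l y z + l x y + l x z) + (1 - l x y) * (1 - l x z)) :=
        expect_le_expect fun y _ ↦ expect_le_expect fun z _ ↦ hpoint y z
    _ = conflict t l x + (1 - degreeDensity l x) ^ 2 := by
        simp only [expect_add_distrib, expect_expect_one_sub_mul_one_sub, conflict]

lemma add_le_conflict_weight_add {τ p q r : ℝ} (hτ0 : 0 ≤ τ) (hτ1 : τ ≤ 1) (hp0 : 0 ≤ p)
    (hp1 : p ≤ 1) (hq0 : 0 ≤ q) (hq1 : q ≤ 1) (hr0 : 0 ≤ r) (hr1 : r ≤ 1) :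
    τ + r ≤ τ * (r + p + q) + (1 - p) * (1 - q) + p * r + q * r := by
  rcases le_total 1 (p + q) with h | h
  · nlinarith [mul_nonneg (sub_nonneg.2 hp1) (sub_nonneg.2 hq1),
      mul_nonneg hτ0 (sub_nonneg.2 h), mul_nonneg hr0 (sub_nonneg.2 h), mul_nonneg hτ0 hr0]
  · nlinarith [mul_nonneg hp0 hq0, mul_nonneg (mul_nonneg hτ0 hr0) (add_nonneg hp0 hq0),
      mul_nonneg (mul_nonneg (sub_nonneg.2 hτ1) (sub_nonneg.2 hr1)) (sub_nonneg.2 h)]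

lemma expect_link_add_expect_le (ht : IsWeightedThreeGraph t) (hl : IsWeightedGraph l) (x : V) :
    (𝔼 y, 𝔼 z, t x y z) + 𝔼 y, degreeDensity l y ≤
      conflict t l x + (1 - degreeDensity l x) ^ 2 + 2 * 𝔼 y, l x y * degreeDensity l y := by
  have hy : 𝔼 y, 𝔼 z, l x y * l y z = 𝔼 y, l x y * degreeDensity l y := by
    simp only [degreeDensity, mul_expect]
  have hz : 𝔼 y, 𝔼 z, l x z * l y z = 𝔼 y, l x y * degreeDensity l y := by
    rw [← hy, expect_comm]
    simp_rw [hl.symm]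
  calc (𝔼 y, 𝔼 z, t x y z) + 𝔼 y, degreeDensity l y = 𝔼 y, 𝔼 z, (t x y z + l y z) := by
        simp only [expect_add_distrib, degreeDensity]
    _ ≤ 𝔼 y, 𝔼 z, (t x y z * (l y z + l x y + l x z) + (1 - l x y) * (1 - l x z) +
          l x y * l y z + l x z * l y z) :=
        expect_le_expect fun y _ ↦ expect_le_expect fun z _ ↦
          add_le_conflict_weight_add (ht.nonneg x y z) (ht.le_one x y z) (hl.nonneg x y)
            (hl.le_one x y) (hl.nonneg x z) (hl.le_one x z) (hl.nonneg y z) (hl.le_one y z)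
    _ = conflict t l x + (1 - degreeDensity l x) ^ 2 + 2 * 𝔼 y, l x y * degreeDensity l y := by
        simp only [expect_add_distrib, expect_expect_one_sub_mul_one_sub, hy, hz, conflict]
        ring

/-- `6 - 4√2 = (2 - √2)²`, so `h₂` forces `k < √2 - 1`; the convex quadratic `(1 - k)² + 2k²` takes
the value `2(6 - 4√2)` at `k = √2 - 1` and at `k = 5/3 - √2`, and `h₁` forces `k > 5/3 - √2`. -/
lemma lt_of_degree_density_bounds {d ε k : ℝ} (hε : 0 < ε) (hk : k ≤ 1) (h₁ : d ≤ k + ε)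
    (h₂ : d ≤ ε + (1 - k) ^ 2) (h₃ : 2 * d ≤ (1 - k) ^ 2 + 2 * k ^ 2 + 3 * ε) :
    d < 6 - 4 * √2 + 2 * ε := by
  by_contra! hd
  have hsq : √2 ^ 2 = 2 := Real.sq_sqrt (by norm_num)
  have hlt : √2 < 1.415 := by rw [Real.sqrt_lt' (by norm_num)]; norm_num
  have hk_le : 2 - √2 ≤ 1 - k := le_of_sq_le_sq (by nlinarith) (by linarith)
  have hbetween : 0 ≤ (√2 - 1 - k) * (k - (5 / 3 - √2)) := by
    apply mul_nonneg <;> linarith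
  nlinarith

theorem sq_div_three_le_expect_mul [Nonempty V] (ht : IsWeightedThreeGraph t)
    (hl : IsWeightedGraph l) {ε : ℝ} (hε : 0 < ε)
    (hdeg : ∀ x, 6 - 4 * √2 + 2 * ε ≤ 𝔼 y, 𝔼 z, t x y z)
    (hdens : 6 - 4 * √2 + 2 * ε ≤ 𝔼 x, degreeDensity l x) :
    ε ^ 2 / 3 ≤ 𝔼 x, 𝔼 y, 𝔼 z, t x y z * l y z := by
  by_contra! hfew
  have hε1 : ε < 1 := by
    have hle : 𝔼 x, degreeDensity l x ≤ 1 :=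
      expect_le univ_nonempty fun x _ ↦ hl.degreeDensity_le_one x
    have hsqrt : √2 < 1.5 := by rw [Real.sqrt_lt' (by norm_num)]; norm_num
    linarith
  have hconflict : 𝔼 x, conflict t l x ≤ ε ^ 2 := by
    rw [expect_conflict ht]
    linarith
  obtain ⟨x, B, hx, hB, hmax⟩ := exists_le_and_dens_le_and_forall_notMem_le
    (conflict_nonneg ht hl) (degreeDensity l) hε hε1 hconflict
  set k := degreeDensity l x with hk
  have hk0 : 0 ≤ k := hl.degreeDensity_nonneg x
  have hk1 : k ≤ 1 := hl.degreeDensity_le_one x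
  have hdens_le : 𝔼 y, degreeDensity l y ≤ k + ε := by
    have := expect_mul_le_expect_mul_add_dens (w := fun _ ↦ 1) (fun _ ↦ zero_le_one)
      (fun _ ↦ le_rfl) hl.degreeDensity_le_one hk0 hmax
    simp only [one_mul, Fintype.expect_const] at this
    linarith
  have hnbrs : 𝔼 y, l x y * degreeDensity l y ≤ k ^ 2 + ε := by
    have := expect_mul_le_expect_mul_add_dens (hl.nonneg x) (hl.le_one x) hl.degreeDensity_le_one
      hk0 hmax
    rw [← degreeDensity, ← hk, ← sq] at this
    linarith
  have hlink := expect_link_le ht hl x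
  have hlink_add := expect_link_add_expect_le ht hl x
  refine (lt_of_degree_density_bounds hε hk1 (hdens.trans hdens_le) ?_ ?_).false
  · linarith [hdeg x]
  · linarith [hdeg x]

end WeightedGraphs

section Supersaturation

lemma half_pow_mul_choose_mul_card_le_sum_choose {ι : Type*} (W : Finset ι) (d : ι → ℕ) (n a : ℕ)
    {δ : ℝ} (hδ : 0 ≤ δ) (ha : 2 * a ≤ δ * n) (hd : δ * (n * #W) ≤ ∑ w ∈ W, (d w : ℝ)) :
    (δ / 2) ^ a * (n.choose a * #W) ≤ ∑ w ∈ W, ((d w).choose a : ℝ) := by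
  rcases W.eq_empty_or_nonempty with rfl | hW
  · simp
  have hW0 : (0 : ℝ) < #W := by exact_mod_cast hW.card_pos
  let u (w : ι) : ℝ := (d w + 1 - a : ℕ)
  have hu (w : ι) : (d w : ℝ) - a ≤ u w := by
    have : d w ≤ d w + 1 - a + a := by lia
    rw [sub_le_iff_le_add]
    simp only [u]
    exact_mod_cast this
  have hmean : δ / 2 * n ≤ ∑ w ∈ W, (#W : ℝ)⁻¹ * u w := by
    rw [← mul_sum, le_inv_mul_iff₀ hW0]
    calc (#W : ℝ) * (δ / 2 * n) ≤ #W * (δ * n - a) := by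
          gcongr
          linarith
      _ ≤ ∑ w ∈ W, ((d w : ℝ) - a) := by
          rw [sum_sub_distrib, sum_const, nsmul_eq_mul]
          linarith
      _ ≤ ∑ w ∈ W, u w := sum_le_sum fun w _ ↦ hu w
  have hpow : #W * (δ / 2 * n) ^ a ≤ ∑ w ∈ W, u w ^ a := by
    rw [← le_inv_mul_iff₀ hW0, mul_sum]
    refine (pow_le_pow_left₀ (by positivity) hmean a).trans ?_
    exact Real.pow_arith_mean_le_arith_mean_pow W _ u (fun _ _ ↦ by positivity)
      (by rw [sum_const, nsmul_eq_mul, mul_inv_cancel₀ hW0.ne']) (fun _ _ ↦ by positivity) a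
  calc (δ / 2) ^ a * (n.choose a * #W) ≤ (δ / 2) ^ a * (n ^ a / a.factorial * #W) := by
        gcongr
        exact Nat.choose_le_pow_div a n
    _ = #W * (δ / 2 * n) ^ a / a.factorial := by ring
    _ ≤ (∑ w ∈ W, u w ^ a) / a.factorial := by gcongr
    _ ≤ ∑ w ∈ W, ((d w).choose a : ℝ) := by
        rw [sum_div]
        exact sum_le_sum fun w _ ↦ Nat.pow_le_choose a (d w)

lemma half_pow_div_factorial_le_choose {n a : ℕ} (h : 2 * a ≤ n) :
    ((n : ℝ) / 2) ^ a / a.factorial ≤ n.choose a := by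
  refine le_trans ?_ (Nat.pow_le_choose a n)
  gcongr
  rw [div_le_iff₀ two_pos]
  norm_cast
  lia

variable {α β γ : Type*}

open scoped Classical in
/-- The edges of the tripartite 3-graph `T` with parts `X`, `Y`, `Z`. -/
noncomputable def triples (T : α → β → γ → Prop) (X : Finset α) (Y : Finset β) (Z : Finset γ) :
    Finset (α × β × γ) :=
  {p ∈ X ×ˢ Y ×ˢ Z | T p.1 p.2.1 p.2.2}

lemma mem_triples {T : α → β → γ → Prop} {X : Finset α} {Y : Finset β} {Z : Finset γ}
    {p : α × β × γ} :
    p ∈ triples T X Y Z ↔ (p.1 ∈ X ∧ p.2.1 ∈ Y ∧ p.2.2 ∈ Z) ∧ T p.1 p.2.1 p.2.2 := by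
  simp only [triples, mem_filter, mem_product]

open scoped Classical in
lemma card_triples_eq_sum (T : α → β → γ → Prop) (X : Finset α) (Y : Finset β) (Z : Finset γ) :
    #(triples T X Y Z) = ∑ q ∈ X ×ˢ Y, #{z ∈ Z | T q.1 q.2 z} := by
  simp only [triples, card_filter, sum_product]

open scoped Classical in
lemma card_triples_powersetCard (T : α → β → γ → Prop) (X : Finset α) (Y : Finset β)
    (Z : Finset γ) (c : ℕ) :
    #(triples (fun C x y ↦ ∀ z ∈ C, T x y z) (Z.powersetCard c) X Y) =
      ∑ q ∈ X ×ˢ Y, (#{z ∈ Z | T q.1 q.2 z}).choose c := by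
  have hlinks (q : α × β) : {C ∈ Z.powersetCard c | ∀ z ∈ C, T q.1 q.2 z} =
      ({z ∈ Z | T q.1 q.2 z} : Finset γ).powersetCard c := by
    ext C
    simp only [mem_filter, mem_powersetCard, subset_iff]
    grind
  simp_rw [← card_powersetCard, ← hlinks, triples, card_filter]
  rw [sum_product, sum_comm]

/-- One step of the blow-up: the vertices of the last part are replaced by `c`-sets of such
vertices, and the parts are rotated so that three steps treat each part once. -/
lemma le_card_triples_powersetCard {T : α → β → γ → Prop} {X : Finset α} {Y : Finset β}
    {Z : Finset γ} {c : ℕ} {δ : ℝ} (hδ : 0 ≤ δ) (hc : 2 * c ≤ δ * #Z)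
    (hT : δ * (#X * #Y * #Z) ≤ #(triples T X Y Z)) :
    (δ / 2) ^ c * ((#Z).choose c * #X * #Y) ≤
      #(triples (fun C x y ↦ ∀ z ∈ C, T x y z) (Z.powersetCard c) X Y) := by
  classical
  rw [card_triples_eq_sum] at hT
  rw [card_triples_powersetCard]
  push_cast at hT ⊢
  have := half_pow_mul_choose_mul_card_le_sum_choose (X ×ˢ Y) (fun q ↦ #{z ∈ Z | T q.1 q.2 z})
    (#Z) c hδ hc (by rw [card_product]; push_cast; linarith)
  rw [card_product] at this
  push_cast at this
  linarith

/-- The complete tripartite 3-graph with parts `A`, `B`, `C` is contained in `T`. -/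
def IsCompleteOn (T : α → β → γ → Prop) (A : Finset α) (B : Finset β) (C : Finset γ) : Prop :=
  ∀ x ∈ A, ∀ y ∈ B, ∀ z ∈ C, T x y z

theorem le_card_triples_isCompleteOn {T : α → β → γ → Prop} {X : Finset α} {Y : Finset β}
    {Z : Finset γ} {a b c : ℕ} {δ : ℝ} (hδ : 0 ≤ δ) (hc : 2 * c ≤ δ * #Z)
    (hb : 2 * b ≤ (δ / 2) ^ c * #Y) (ha : 2 * a ≤ ((δ / 2) ^ c / 2) ^ b * #X)
    (hT : δ * (#X * #Y * #Z) ≤ #(triples T X Y Z)) :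
    (((δ / 2) ^ c / 2) ^ b / 2) ^ a * ((#X).choose a * (#Y).choose b * (#Z).choose c) ≤
      #(triples (IsCompleteOn T) (X.powersetCard a) (Y.powersetCard b) (Z.powersetCard c)) := by
  have hZ := le_card_triples_powersetCard hδ hc hT
  rw [← card_powersetCard] at hZ
  have hY := le_card_triples_powersetCard (by positivity) hb hZ
  rw [← card_powersetCard] at hY
  have hX := le_card_triples_powersetCard (by positivity) ha hY
  rwa [card_powersetCard, card_powersetCard] at hX

theorem exists_eventually_le_card_triples_isCompleteOn (a b c : ℕ) {δ : ℝ} (hδ : 0 < δ) :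
    ∃ κ : ℝ, 0 < κ ∧ ∀ᶠ n : ℕ in atTop, ∀ (V : Type*) [Fintype V], Fintype.card V = n →
      ∀ T : V → V → V → Prop, δ * (n : ℝ) ^ 3 ≤ #(triples T univ univ univ) →
        κ * (n : ℝ) ^ (a + b + c) ≤ #(triples (IsCompleteOn T) (univ.powersetCard a)
          (univ.powersetCard b) (univ.powersetCard c)) := by
  have eventually_le (k : ℕ) {ρ : ℝ} (hρ : 0 < ρ) : ∀ᶠ n : ℕ in atTop, 2 * (k : ℝ) ≤ ρ * n :=
    (tendsto_natCast_atTop_atTop.const_mul_atTop hρ).eventually_ge_atTop _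
  refine ⟨(((δ / 2) ^ c / 2) ^ b / 2) ^ a *
    ((1 / 2) ^ a / a.factorial * ((1 / 2) ^ b / b.factorial) * ((1 / 2) ^ c / c.factorial)),
    by positivity, ?_⟩
  filter_upwards [eventually_ge_atTop (2 * a), eventually_ge_atTop (2 * b),
    eventually_ge_atTop (2 * c), eventually_le c hδ,
    eventually_le b (ρ := (δ / 2) ^ c) (by positivity),
    eventually_le a (ρ := ((δ / 2) ^ c / 2) ^ b) (by positivity)]
    with n hna hnb hnc hδc hδb hδa V _ hV T hT
  have hcard : #(univ : Finset V) = n := hV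
  have hblowup := le_card_triples_isCompleteOn (T := T) (X := univ) (Y := univ) (Z := univ)
    hδ.le (by rwa [hcard]) (by rwa [hcard]) (by rwa [hcard]) (by rw [hcard]; linarith)
  rw [hcard] at hblowup
  refine le_trans ?_ hblowup
  calc _ = (((δ / 2) ^ c / 2) ^ b / 2) ^ a * (((n : ℝ) / 2) ^ a / a.factorial *
        (((n : ℝ) / 2) ^ b / b.factorial) * (((n : ℝ) / 2) ^ c / c.factorial)) := by ring
    _ ≤ _ := by gcongr <;> exact half_pow_div_factorial_le_choose ‹_›

end Supersaturation

section Hypergraphs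

variable {V : Type*} [DecidableEq V]

/-- The indicator of the edges of `H`, as a weighted 3-graph; edges with fewer than three vertices
show up as triples with repeated entries. -/
def edgeIndicator (H : Finset (Finset V)) (x y z : V) : ℝ := if {x, y, z} ∈ H then 1 else 0

lemma isWeightedThreeGraph_edgeIndicator (H : Finset (Finset V)) :
    IsWeightedThreeGraph (edgeIndicator H) where
  swap_left x y z := by rw [edgeIndicator, edgeIndicator, insert_comm]
  swap_right x y z := by rw [edgeIndicator, edgeIndicator, pair_comm]
  nonneg x y z := by rw [edgeIndicator]; positivity
  le_one x y z := by rw [edgeIndicator]; split_ifs <;> norm_num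

/-- The copies of `K³_{a,b,c}` in `H` that contain `v`. -/
def copiesThrough (H : Finset (Finset V)) (a b c : ℕ) (v : V) :
    Set (Finset V × Finset V × Finset V) :=
  {p | p.1.card = a ∧ p.2.1.card = b ∧ p.2.2.card = c ∧
    Disjoint p.1 p.2.1 ∧ Disjoint p.1 p.2.2 ∧ Disjoint p.2.1 p.2.2 ∧
    (v ∈ p.1 ∨ v ∈ p.2.1 ∨ v ∈ p.2.2) ∧
    ∀ x ∈ p.1, ∀ y ∈ p.2.1, ∀ z ∈ p.2.2, ({x, y, z} : Finset V) ∈ H}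

lemma mem_copiesThrough_of_isCompleteOn {H : Finset (Finset V)} (hH : ∀ e ∈ H, #e = 3)
    {A B C : Finset V} (hB : B.Nonempty) (hC : C.Nonempty) {v : V} (hv : v ∈ A)
    (hABC : IsCompleteOn (fun x y z ↦ {x, y, z} ∈ H) A B C) :
    (A, B, C) ∈ copiesThrough H #A #B #C v := by
  have hne {x y z : V} (h : {x, y, z} ∈ H) : x ≠ y ∧ x ≠ z ∧ y ≠ z := by
    have hcard := hH _ h
    refine ⟨?_, ?_, ?_⟩ <;> rintro rfl <;> grind [card_le_two]
  obtain ⟨y, hy⟩ := hB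
  obtain ⟨z, hz⟩ := hC
  refine ⟨rfl, rfl, rfl, ?_, ?_, ?_, Or.inl hv, hABC⟩ <;> refine disjoint_left.2 fun w hw hw' ↦ ?_
  · exact (hne (hABC w hw w hw' z hz)).1 rfl
  · exact (hne (hABC w hw y hy w hw')).2.1 rfl
  · exact (hne (hABC v hv w hw w hw')).2.2 rfl

variable [Fintype V]

lemma two_mul_card_filter_mem_le_card_pairs {H : Finset (Finset V)} (hH : ∀ e ∈ H, #e = 3)
    (x : V) : 2 * #{e ∈ H | x ∈ e} ≤ #{p : V × V | {x, p.1, p.2} ∈ H} := by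
  apply mul_card_image_le_card_of_maps_to (f := fun p : V × V ↦ ({x, p.1, p.2} : Finset V))
  · intro p hp
    simpa using hp
  · intro e he
    obtain ⟨heH, hxe⟩ := mem_filter.1 he
    obtain ⟨y, z, hyz, hpair⟩ : ∃ y z, y ≠ z ∧ e.erase x = {y, z} :=
      card_eq_two.1 (by rw [card_erase_of_mem hxe, hH e heH])
    have hxyz : {x, y, z} = e := by rw [← insert_erase hxe, hpair]
    have hxzy : {x, z, y} = e := by rw [← hxyz, pair_comm]
    calc 2 = #{(y, z), (z, y)} := (card_pair fun h ↦ hyz (congrArg Prod.fst h)).symm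
      _ ≤ _ := card_le_card (by simp [insert_subset_iff, hxyz, hxzy, heH])

lemma expect_edgeIndicator (H : Finset (Finset V)) (x : V) :
    𝔼 y, 𝔼 z, edgeIndicator H x y z =
      #{p : V × V | {x, p.1, p.2} ∈ H} / (Fintype.card V : ℝ) ^ 2 := by
  simp only [Fintype.expect_eq_sum_div_card, edgeIndicator]
  rw [← sum_div, div_div, ← sq, ← Fintype.sum_prod_type', sum_boole]

lemma le_expect_edgeIndicator_of_le_card {H : Finset (Finset V)} (hH : ∀ e ∈ H, #e = 3) {x : V}
    {n : ℕ} (hV : Fintype.card V = n) {D ρ : ℝ} (hD : D ≤ ρ * n)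
    (hdeg : D * ((n : ℝ) * ((n : ℝ) - 1) / 2) ≤ #{e ∈ H | x ∈ e}) :
    D - ρ ≤ 𝔼 y, 𝔼 z, edgeIndicator H x y z := by
  have hn : (0 : ℝ) < n := by
    rw [← hV]
    exact_mod_cast Fintype.card_pos_iff.2 ⟨x⟩
  have hpairs : (2 * #{e ∈ H | x ∈ e} : ℝ) ≤ #{p : V × V | {x, p.1, p.2} ∈ H} := by
    exact_mod_cast two_mul_card_filter_mem_le_card_pairs hH x
  rw [expect_edgeIndicator, hV, le_div_iff₀ (by positivity)]
  nlinarith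

lemma le_card_triples_of_le_expect {H : Finset (Finset V)} {v : V} {δ : ℝ}
    (h : δ ≤ 𝔼 x, 𝔼 y, 𝔼 z, edgeIndicator H x y z * edgeIndicator H v y z) :
    δ * (Fintype.card V : ℝ) ^ 3 ≤
      #(triples (fun x y z ↦ {x, y, z} ∈ H ∧ {v, y, z} ∈ H) univ univ univ) := by
  have hV : (0 : ℝ) < Fintype.card V := by exact_mod_cast Fintype.card_pos_iff.2 ⟨v⟩
  have hcount : 𝔼 x, 𝔼 y, 𝔼 z, edgeIndicator H x y z * edgeIndicator H v y z =
      #(triples (fun x y z ↦ {x, y, z} ∈ H ∧ {v, y, z} ∈ H) univ univ univ) /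
        (Fintype.card V : ℝ) ^ 3 := by
    have hmul (x y z : V) : edgeIndicator H x y z * edgeIndicator H v y z =
        if {x, y, z} ∈ H ∧ {v, y, z} ∈ H then 1 else 0 := by
      simp only [edgeIndicator, ite_and, ite_mul, one_mul, zero_mul]
    simp_rw [hmul, Fintype.expect_eq_sum_div_card, ← sum_div, triples, card_filter, sum_product,
      Nat.cast_sum, Nat.cast_ite, Nat.cast_one, Nat.cast_zero, div_div, pow_succ, pow_zero, one_mul]
  rwa [hcount, le_div_iff₀ (by positivity)] at h

/-- A set `A` of common neighbours of `B × C` becomes one that contains the common neighbour `v` by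
exchanging `v` with some `x ∈ A`, and `x` is all that is lost. -/
lemma card_triples_le_ncard_copiesThrough_mul {H : Finset (Finset V)} (hH : ∀ e ∈ H, #e = 3)
    {a b c : ℕ} (ha : a ≠ 0) (hb : b ≠ 0) (hc : c ≠ 0) (v : V) :
    #(triples (IsCompleteOn fun x y z ↦ {x, y, z} ∈ H ∧ {v, y, z} ∈ H) (univ.powersetCard a)
        (univ.powersetCard b) (univ.powersetCard c)) ≤
      (copiesThrough H a b c v).ncard * Fintype.card V := by
  classical
  rw [Set.ncard_eq_toFinset_card', ← card_univ, ← card_product]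
  refine card_le_card_of_surjOn (fun q ↦ (insert q.2 (q.1.1.erase v), q.1.2)) ?_
  rintro ⟨A, B, C⟩ hABC
  simp only [mem_coe, mem_triples, mem_powersetCard_univ] at hABC
  obtain ⟨⟨rfl, rfl, rfl⟩, hcomplete⟩ := hABC
  rw [Finset.card_ne_zero] at ha hb hc
  obtain ⟨x, hx, hxv⟩ : ∃ x ∈ A, v ∈ A → x = v := by
    by_cases hv : v ∈ A
    · exact ⟨v, hv, fun _ ↦ rfl⟩
    · exact ha.imp fun x hx ↦ ⟨hx, fun h ↦ absurd h hv⟩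
  have hswap : insert x ((insert v (A.erase x)).erase v) = A := by grind
  have hcard : #(insert v (A.erase x)) = #A := by
    rw [card_insert_of_notMem (by grind), card_erase_add_one hx]
  have hcopy : (insert v (A.erase x), B, C) ∈ copiesThrough H #A #B #C v := by
    rw [← hcard]
    refine mem_copiesThrough_of_isCompleteOn hH hb hc (mem_insert_self _ _) ?_
    intro x' hx' y hy z hz
    obtain rfl | hx' := mem_insert.1 hx'
    · exact (hcomplete x hx y hy z hz).2
    · exact (hcomplete x' (mem_of_mem_erase hx') y hy z hz).1
  exact ⟨((insert v (A.erase x), B, C), x), by simpa using hcopy, by simp only [hswap]⟩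

end Hypergraphs

/-- Corollary 1.3: for every `a, b, c ≥ 1` and `γ > 0` there exist `η > 0` and `n₀`
such that every 3-graph `H` on `n ≥ n₀` vertices with minimum vertex degree at least
`(6 - 4√2 + γ)·C(n,2)` has, through each vertex, at least `η·n^(a+b+c-1)` copies of
`K³_{a,b,c}`. -/
theorem min_degree_forces_Kabc (a b c : ℕ) (ha : 1 ≤ a) (hb : 1 ≤ b) (hc : 1 ≤ c)
    (γ : ℝ) (hγ : 0 < γ) :
    ∃ η : ℝ, 0 < η ∧ ∃ n₀ : ℕ, ∀ n : ℕ, n₀ ≤ n →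
      ∀ (V : Type) [Fintype V] [DecidableEq V], Fintype.card V = n →
      ∀ H : Finset (Finset V), (∀ e ∈ H, e.card = 3) →
      (∀ x : V, (6 - 4 * Real.sqrt 2 + γ) * ((n : ℝ) * ((n : ℝ) - 1) / 2)
          ≤ ((H.filter (fun e => x ∈ e)).card : ℝ)) →
      ∀ v : V,
        η * (n : ℝ) ^ (a + b + c - 1) ≤
          (({p : Finset V × Finset V × Finset V |
              p.1.card = a ∧ p.2.1.card = b ∧ p.2.2.card = c ∧
              Disjoint p.1 p.2.1 ∧ Disjoint p.1 p.2.2 ∧ Disjoint p.2.1 p.2.2 ∧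
              (v ∈ p.1 ∨ v ∈ p.2.1 ∨ v ∈ p.2.2) ∧
              ∀ x ∈ p.1, ∀ y ∈ p.2.1, ∀ z ∈ p.2.2,
                ({x, y, z} : Finset V) ∈ H}.ncard : ℝ)) := by
  obtain ⟨κ, hκ, hsuper⟩ := exists_eventually_le_card_triples_isCompleteOn a b c
    (δ := (γ / 4) ^ 2 / 3) (by positivity)
  have hlarge : ∀ᶠ n : ℕ in atTop, 6 - 4 * √2 + γ ≤ γ / 2 * n :=
    (tendsto_natCast_atTop_atTop.const_mul_atTop (by positivity)).eventually_ge_atTop _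
  obtain ⟨n₀, hn₀⟩ := eventually_atTop.1 (hsuper.and hlarge)
  refine ⟨κ, hκ, n₀, fun n hn V _ _ hV H hH hdeg v ↦ ?_⟩
  obtain ⟨hblowup, hlarge_n⟩ := hn₀ n hn
  have hlinks (x : V) : 6 - 4 * √2 + 2 * (γ / 4) ≤ 𝔼 y, 𝔼 z, edgeIndicator H x y z := by
    linarith [le_expect_edgeIndicator_of_le_card hH hV hlarge_n (hdeg x)]
  have hH_weighted := isWeightedThreeGraph_edgeIndicator H
  have : Nonempty V := ⟨v⟩
  have hdense := sq_div_three_le_expect_mul hH_weighted (hH_weighted.link v) (by positivity)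
    hlinks (hlinks v)
  have htriples := le_card_triples_of_le_expect hdense
  have hcomplete := hblowup V hV _ (hV ▸ htriples)
  have hcopies := card_triples_le_ncard_copiesThrough_mul hH (a := a) (b := b) (c := c)
    (by lia) (by lia) (by lia) v
  have hn_pos : 0 < n := hV ▸ Fintype.card_pos
  rw [hV] at hcopies
  refine le_of_mul_le_mul_right ?_ (Nat.cast_pos (α := ℝ).2 hn_pos)
  rw [mul_assoc, pow_sub_one_mul (by lia)]
  exact hcomplete.trans (by exact_mod_cast hcopies)
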